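/- arXiv:2511.06524 — 2 statements merged into one kernel-verified Lean document; each statement's English description precedes it below -/
import Mathlib

section
/- Let A ∈ ℝ^{n×n}, B ∈ ℝ^{n×m}, C ∈ ℝ^{p×n}, μ := (p+m)·n, F ∈ ℝ^{n×n}, L ∈ ℝ^{n×p}, and let T ∈ ℝ^{n×n} be invertible with F·T = T·(A − L·C). Define θ := [vec(T·L); vec(T·B)] ∈ ℝ^{μ} (vertical concatenation). Then for every u : ℝ → ℝ^m, every differentiable x : ℝ → ℝ^n with x'(t) = A·x(t) + B·u(t) for all t ≥ 0, with y(t) := C·x(t), and every differentiable M : ℝ → ℝ^{n×μ} with M'(t) = F·M(t) + [y(t)^⊤ ⊗ I_n , u(t)^⊤ ⊗ I_n] for all t ≥ 0, it holds for all t ≥ 0 that T·x(t) = M(t)·θ + exp(F·t)·(T·x(0) − M(0)·θ). -/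
open Matrix Filter
open scoped Kronecker

/-- Column-stacking vectorization `vec X : (col, row) ↦ X row col`
(`vec X` stacks the columns of `X` one below another). -/
def mvec {l : ℕ} {K : Type*} (X : Matrix (Fin l) K ℝ) : K × Fin l → ℝ :=
  fun q => X q.2 q.1

/-- The Kronecker product `θᵀ ⊗ S` of a row vector `θᵀ` with a square matrix `S`,
with the trivial row index of `θᵀ` flattened away. -/
def rowKron {n : ℕ} {K : Type*} (θ : K → ℝ) (S : Matrix (Fin n) (Fin n) ℝ) :
    Matrix (Fin n) (K × Fin n) ℝ :=
  ((Matrix.of fun (_ : Fin 1) j => θ j) ⊗ₖ S).submatrix (fun i => ((0 : Fin 1), i)) id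

/-- Column index set of the Kreisselmeier filter state `M ∈ ℝ^{n × (p+m)n}`. -/
abbrev Kix (n m p : ℕ) := (Fin p × Fin n) ⊕ (Fin m × Fin n)

/-- The regressor `[yᵀ ⊗ Iₙ , uᵀ ⊗ Iₙ] ∈ ℝ^{n × (p+m)n}` (horizontal concatenation). -/
def regressor {m p : ℕ} (n : ℕ) (y : Fin p → ℝ) (u : Fin m → ℝ) :
    Matrix (Fin n) (Kix n m p) ℝ :=
  Matrix.fromCols (rowKron y (1 : Matrix (Fin n) (Fin n) ℝ))
    (rowKron u (1 : Matrix (Fin n) (Fin n) ℝ))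

/-- A real square matrix is Hurwitz if all of its eigenvalues over `ℂ`
have strictly negative real part. -/
def IsHurwitz {N : Type*} [Fintype N] [DecidableEq N] (A : Matrix N N ℝ) : Prop :=
  ∀ z ∈ spectrum ℂ (A.map (Complex.ofReal : ℝ → ℂ)), z.re < 0

/-- PBH test for stabilizability: for every `λ ∈ ℂ` with `Re λ ≥ 0`,
`rank [λ·I − A₀ , B₀] = q` over `ℂ`. -/
def IsStabilizable {q m : Type*} [Fintype q] [DecidableEq q] [Fintype m]
    (A₀ : Matrix q q ℝ) (B₀ : Matrix q m ℝ) : Prop :=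
  ∀ z : ℂ, 0 ≤ z.re →
    (Matrix.fromCols (z • (1 : Matrix q q ℂ) - A₀.map (Complex.ofReal : ℝ → ℂ))
      (B₀.map (Complex.ofReal : ℝ → ℂ))).rank = Fintype.card q

/-- Euclidean norm of a vector. -/
noncomputable def euclNorm {ι : Type*} [Fintype ι] (v : ι → ℝ) : ℝ :=
  Real.sqrt (∑ i, v i ^ 2)

/-- Frobenius norm of a matrix. -/
noncomputable def frobNorm {ι K : Type*} [Fintype ι] [Fintype K] (X : Matrix ι K ℝ) : ℝ :=
  Real.sqrt (∑ i, ∑ j, X i j ^ 2)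

/-- `F_ξ := I_μ ⊗ F`. -/
def Fxi {n m p : ℕ} (F : Matrix (Fin n) (Fin n) ℝ) :
    Matrix (Kix n m p × Fin n) (Kix n m p × Fin n) ℝ :=
  (1 : Matrix (Kix n m p) (Kix n m p) ℝ) ⊗ₖ F

/-- `B_ξ := [0_{pn²×m} ; I_m ⊗ vec(I_n)]` (vertical concatenation), written entrywise
on the flattened row index `Kix n m p × Fin n`. -/
def Bxi (n m p : ℕ) : Matrix (Kix n m p × Fin n) (Fin m) ℝ :=
  Matrix.of fun q j =>
    Sum.elim (fun _ => (0 : ℝ))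
      (fun ja => (1 : Matrix (Fin m) (Fin m) ℝ) ja.1 j *
        (1 : Matrix (Fin n) (Fin n) ℝ) ja.2 q.2) q.1

/-- `L_ξ := [I_p ⊗ vec(I_n) ; 0_{mn²×p}]` (vertical concatenation), written entrywise
on the flattened row index `Kix n m p × Fin n`. -/
def Lxi (n m p : ℕ) : Matrix (Kix n m p × Fin n) (Fin p) ℝ :=
  Matrix.of fun q j =>
    Sum.elim (fun ya => (1 : Matrix (Fin p) (Fin p) ℝ) ya.1 j *
        (1 : Matrix (Fin n) (Fin n) ℝ) ya.2 q.2) (fun _ => (0 : ℝ)) q.1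

theorem exp_entry_hasDerivAt {n : ℕ} (F : Matrix (Fin n) (Fin n) ℝ) (t : ℝ) (i j : Fin n) :
    HasDerivAt (fun s : ℝ => NormedSpace.exp (s • F) i j)
      ((NormedSpace.exp (t • F) * F) i j) t := by
  letI : NormedRing (Matrix (Fin n) (Fin n) ℝ) := Matrix.linftyOpNormedRing
  letI : NormedAlgebra ℝ (Matrix (Fin n) (Fin n) ℝ) := Matrix.linftyOpNormedAlgebra
  have h : HasDerivAt (fun s : ℝ => NormedSpace.exp (s • F)) (NormedSpace.exp (t • F) * F) t :=
    hasDerivAt_exp_smul_const (𝕂 := ℝ) F t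
  let φ : Matrix (Fin n) (Fin n) ℝ →ₗ[ℝ] ℝ :=
    { toFun := fun X => X i j, map_add' := fun _ _ => rfl, map_smul' := fun _ _ => rfl }
  exact (LinearMap.toContinuousLinearMap φ).hasFDerivAt.comp_hasDerivAt t h

theorem rowKron_one_mulVec {n : ℕ} {K : Type*} [Fintype K] (y : K → ℝ)
    (X : Matrix (Fin n) K ℝ) :
    (rowKron y (1 : Matrix (Fin n) (Fin n) ℝ)).mulVec (mvec X) = X.mulVec y := by
  ext i
  simp [rowKron, mvec, Matrix.mulVec, dotProduct, Fintype.sum_prod_type, Matrix.one_apply,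
    mul_comm]

theorem linear_ode_unique {n : ℕ} (F : Matrix (Fin n) (Fin n) ℝ) (e : ℝ → Fin n → ℝ)
    (he : ∀ t, 0 ≤ t → ∀ i, HasDerivAt (fun s => e s i) (F.mulVec (e t) i) t)
    (t : ℝ) (ht : 0 ≤ t) :
    e t = (NormedSpace.exp (t • F)).mulVec (e 0) := by
  have key : ∀ i, ((NormedSpace.exp (t • (-F))).mulVec (e t)) i = e 0 i := by
    intro i
    have hd : ∀ s, 0 ≤ s →
        HasDerivAt (fun s => ((NormedSpace.exp (s • (-F))).mulVec (e s)) i) 0 s := by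
      intro s hs
      have h := HasDerivAt.fun_sum (u := Finset.univ) (fun j _ =>
        (exp_entry_hasDerivAt (-F) s i j).mul (he s hs j))
      refine h.congr_deriv ?_
      rw [Finset.sum_add_distrib]
      change ((NormedSpace.exp (s • (-F)) * (-F)).mulVec (e s)) i +
        ((NormedSpace.exp (s • (-F))).mulVec (F.mulVec (e s))) i = 0
      rw [Matrix.mulVec_mulVec]
      simp [Matrix.neg_mulVec]
    have h := constant_of_has_deriv_right_zero (a := 0) (b := t)
      (fun s hs => (hd s hs.1).continuousAt.continuousWithinAt)
      (fun s hs => (hd s hs.1).hasDerivWithinAt) t ⟨ht, le_rfl⟩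
    simpa using h
  have key' := funext key
  rw [← key', Matrix.mulVec_mulVec, ← Matrix.exp_add_of_commute]
  · simp
  · simp

/-- Kreisselmeier's filter relation, explicit `θ`.
With `T` invertible, `F·T = T·(A − L·C)` and `θ := [vec(T·L); vec(T·B)]`, every plant
trajectory and filter trajectory satisfy
`T x(t) = M(t) θ + exp(Ft) (T x(0) − M(0) θ)` for all `t ≥ 0`. -/
theorem stmt1 {n m p : ℕ}
    (A : Matrix (Fin n) (Fin n) ℝ) (B : Matrix (Fin n) (Fin m) ℝ)
    (C : Matrix (Fin p) (Fin n) ℝ)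
    (F : Matrix (Fin n) (Fin n) ℝ) (L : Matrix (Fin n) (Fin p) ℝ)
    (T : Matrix (Fin n) (Fin n) ℝ) (hT : IsUnit T)
    (hFT : F * T = T * (A - L * C))
    (θ : Kix n m p → ℝ) (hθ : θ = Sum.elim (mvec (T * L)) (mvec (T * B))) :
    ∀ (u : ℝ → Fin m → ℝ) (x : ℝ → Fin n → ℝ) (M : ℝ → Matrix (Fin n) (Kix n m p) ℝ),
      (∀ t, 0 ≤ t → ∀ i, HasDerivAt (fun s => x s i)
          ((A.mulVec (x t) + B.mulVec (u t)) i) t) →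
      (∀ t, 0 ≤ t → ∀ i j, HasDerivAt (fun s => M s i j)
          ((F * M t + regressor n (C.mulVec (x t)) (u t)) i j) t) →
      ∀ t, 0 ≤ t →
        T.mulVec (x t) = (M t).mulVec θ +
          (NormedSpace.exp (t • F)).mulVec (T.mulVec (x 0) - (M 0).mulVec θ) := by
  intro u x M hx hM t ht
  have h := linear_ode_unique F (fun s => T.mulVec (x s) - (M s).mulVec θ) ?_ t ht
  · rw [← h]
    simp
  intro s hs i
  have h1 := HasDerivAt.fun_sum (u := Finset.univ) (fun j _ => (hx s hs j).const_mul (T i j))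
  have h2 := HasDerivAt.fun_sum (u := Finset.univ) (fun j _ => (hM s hs i j).mul_const (θ j))
  refine (h1.sub h2).congr_deriv ?_
  change (T.mulVec (A.mulVec (x s) + B.mulVec (u s)) -
    (F * M s + regressor n (C.mulVec (x s)) (u s)).mulVec θ) i = _

  have hr : (regressor n (C.mulVec (x s)) (u s)).mulVec θ =
      (T * L).mulVec (C.mulVec (x s)) + (T * B).mulVec (u s) := by
    rw [hθ, regressor, Matrix.fromCols_mulVec]
    simp [Function.comp_def, rowKron_one_mulVec]
  have hF : F.mulVec (T.mulVec (x s)) =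
      T.mulVec (A.mulVec (x s)) - (T * L).mulVec (C.mulVec (x s)) := by
    rw [Matrix.mulVec_mulVec, hFT]
    simp only [Matrix.mulVec_mulVec, Matrix.mul_sub, Matrix.sub_mulVec, Matrix.mul_assoc]
  rw [Matrix.add_mulVec, hr, Matrix.mulVec_sub, hF, Matrix.mulVec_add, ← Matrix.mulVec_mulVec _ F,
    Matrix.mulVec_mulVec _ T B]
  simp only [Pi.sub_apply, Pi.add_apply]
  ring
end

section
/- Let A_e ∈ ℝ^{q×q}, B_e ∈ ℝ^{q×m}, and let T_z ∈ ℝ^{q×q} be orthogonal such that T_z·A_e·T_z^⊤ = [[A_a, A_ab], [0, A_b]] and T_z·B_e = [B_a; 0], with A_a ∈ ℝ^{l×l}, A_b ∈ ℝ^{(q−l)×(q−l)} Hurwitz, and B_a ∈ ℝ^{l×m}. Let Z_a ∈ ℝ^{l×N}, U ∈ ℝ^{m×N}, set Ż_a := A_a·Z_a + B_a·U, and suppose Q ∈ ℝ^{N×l} satisfies: Z_a·Q is symmetric and positive definite, and Ż_a·Q + (Ż_a·Q)^⊤ is negative definite. Then the gain K_e := [U·Q·(Z_a·Q)^{−1},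 0_{m×(q−l)}]·T_z ∈ ℝ^{m×q} is such that A_e + B_e·K_e is Hurwitz. -/
open Matrix Filter
open scoped Kronecker

theorem hurwitz_iff_det {N : Type*} [Fintype N] [DecidableEq N] (A : Matrix N N ℝ) :
    IsHurwitz A ↔ ∀ z : ℂ,
      (z • (1 : Matrix N N ℂ) - A.map (Complex.ofReal : ℝ → ℂ)).det = 0 → z.re < 0 := by
  unfold IsHurwitz
  refine forall_congr' fun z => ?_
  rw [spectrum.mem_iff, Matrix.isUnit_iff_isUnit_det, isUnit_iff_ne_zero, not_not,
    Algebra.algebraMap_eq_smul_one]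

theorem lyap_hurwitz {l : ℕ} (M P : Matrix (Fin l) (Fin l) ℝ) (hP : P.PosDef)
    (hS : (-(M * P + (M * P)ᵀ)).PosDef) : IsHurwitz M := by
  rw [hurwitz_iff_det]
  intro z hz
  obtain ⟨v, hv0, hv⟩ := Matrix.exists_vecMul_eq_zero_iff.mpr hz
  have hv' : ∀ j, z * v j = ∑ i, v i * (M i j : ℂ) := by
    intro j
    have := congrFun hv j
    rw [Matrix.vecMul_sub, Matrix.vecMul_smul, Matrix.vecMul_one] at this
    simp only [Pi.sub_apply, Pi.smul_apply, smul_eq_mul, Pi.zero_apply, Matrix.vecMul,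
      dotProduct, Matrix.map_apply] at this
    exact sub_eq_zero.mp this
  set a : Fin l → ℝ := fun i => (v i).re with ha
  set b : Fin l → ℝ := fun i => (v i).im with hb
  have hA : a ᵥ* M = z.re • a - z.im • b := by
    ext j
    have := congrArg Complex.re (hv' j)
    simp [Complex.re_sum] at this
    simp [Matrix.vecMul, dotProduct, ha, hb, this]
  have hB : b ᵥ* M = z.re • b + z.im • a := by
    ext j
    have := congrArg Complex.im (hv' j)
    simp [Complex.im_sum] at this
    simp [Matrix.vecMul, dotProduct, ha, hb, this]
  have hsym : b ⬝ᵥ P *ᵥ a = a ⬝ᵥ P *ᵥ b := by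
    have hT : Pᵀ = P := by simpa [Matrix.IsHermitian] using hP.1
    rw [dotProduct_comm, ← Matrix.vecMul_transpose, hT, ← Matrix.dotProduct_mulVec]
  have hq : ∀ w : Fin l → ℝ, w ⬝ᵥ (-(M * P + (M * P)ᵀ)) *ᵥ w
      = -2 * ((w ᵥ* M) ⬝ᵥ P *ᵥ w) := by
    intro w
    have h1 : w ⬝ᵥ (M * P) *ᵥ w = (w ᵥ* M) ⬝ᵥ P *ᵥ w := by
      rw [← Matrix.mulVec_mulVec, Matrix.dotProduct_mulVec]
    have h2 : w ⬝ᵥ (M * P)ᵀ *ᵥ w = w ⬝ᵥ (M * P) *ᵥ w := by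
      rw [Matrix.mulVec_transpose, dotProduct_comm, ← Matrix.dotProduct_mulVec]
    rw [Matrix.neg_mulVec, Matrix.add_mulVec, dotProduct_neg, dotProduct_add, h2, h1]
    ring
  have hnn : ∀ {R : Matrix (Fin l) (Fin l) ℝ}, R.PosDef →
      0 < a ⬝ᵥ R *ᵥ a + b ⬝ᵥ R *ᵥ b := by
    intro R hR
    have ps : ∀ w : Fin l → ℝ, 0 ≤ w ⬝ᵥ R *ᵥ w := fun w => by
      simpa using hR.posSemidef.dotProduct_mulVec_nonneg w
    by_cases h : a = 0
    · have hb0 : b ≠ 0 := by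
        intro h'
        apply hv0
        ext i
        exact Complex.ext (congrFun h i) (congrFun h' i)
      have : 0 < b ⬝ᵥ R *ᵥ b := by simpa using hR.dotProduct_mulVec_pos hb0
      linarith [ps a]
    · have : 0 < a ⬝ᵥ R *ᵥ a := by simpa using hR.dotProduct_mulVec_pos h
      linarith [ps b]
  have h1 := hnn hP
  have h2 := hnn hS
  rw [hq, hq, hA, hB] at h2
  simp only [sub_dotProduct, add_dotProduct, smul_dotProduct, smul_eq_mul, hsym] at h2
  by_contra hc
  push Not at hc
  nlinarith [mul_nonneg hc h1.le]

/-- main theorem of the paper: the gain computed from the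
data-based LMI in the reduced coordinates stabilizes the extended system.
If `T_z` is orthogonal with `T_z·A_e·T_zᵀ = [[A_a, A_ab], [0, A_b]]`,
`T_z·B_e = [B_a; 0]`, `A_b` Hurwitz, and `Q` satisfies the LMI
`Z_a·Q = (Z_a·Q)ᵀ ≻ 0`, `Ż_a·Q + (Ż_a·Q)ᵀ ≺ 0` with `Ż_a := A_a·Z_a + B_a·U`,
then `K_e := [U·Q·(Z_a·Q)⁻¹, 0]·T_z` makes `A_e + B_e·K_e` Hurwitz. -/
theorem stmt17 {q l m N : ℕ}
    (Ae : Matrix (Fin q) (Fin q) ℝ) (Be : Matrix (Fin q) (Fin m) ℝ)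
    (Tz : Matrix (Fin l ⊕ Fin (q - l)) (Fin q) ℝ)
    (hTz1 : Tz * Tzᵀ = 1) (hTz2 : Tzᵀ * Tz = 1)
    (Aa : Matrix (Fin l) (Fin l) ℝ) (Aab : Matrix (Fin l) (Fin (q - l)) ℝ)
    (Ab : Matrix (Fin (q - l)) (Fin (q - l)) ℝ) (hAb : IsHurwitz Ab)
    (hAdec : Tz * Ae * Tzᵀ = Matrix.fromBlocks Aa Aab 0 Ab)
    (Ba : Matrix (Fin l) (Fin m) ℝ)
    (hBdec : Tz * Be = Matrix.fromRows Ba (0 : Matrix (Fin (q - l)) (Fin m) ℝ))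
    (Za : Matrix (Fin l) (Fin N) ℝ) (U : Matrix (Fin m) (Fin N) ℝ)
    (Zdot : Matrix (Fin l) (Fin N) ℝ) (hZdot : Zdot = Aa * Za + Ba * U)
    (Q : Matrix (Fin N) (Fin l) ℝ)
    (hpos : (Za * Q).PosDef)
    (hneg : (-(Zdot * Q + (Zdot * Q)ᵀ)).PosDef)
    (Ke : Matrix (Fin m) (Fin q) ℝ)
    (hKe : Ke = Matrix.fromCols (U * Q * (Za * Q)⁻¹)
      (0 : Matrix (Fin m) (Fin (q - l)) ℝ) * Tz) :
    IsHurwitz (Ae + Be * Ke) := by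
  have hdet : IsUnit (Za * Q).det := (Matrix.isUnit_iff_isUnit_det _).mp hpos.isUnit
  have hM : IsHurwitz (Aa + Ba * (U * Q * (Za * Q)⁻¹)) := by
    apply lyap_hurwitz _ (Za * Q) hpos
    have : (Aa + Ba * (U * Q * (Za * Q)⁻¹)) * (Za * Q) = Zdot * Q := by
      rw [hZdot, Matrix.add_mul, Matrix.add_mul, Matrix.mul_assoc Ba, Matrix.mul_assoc (U * Q),
        Matrix.nonsing_inv_mul _ hdet, Matrix.mul_one, Matrix.mul_assoc, Matrix.mul_assoc]
    rw [this]
    exact hneg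
  have hblk : Tz * (Ae + Be * Ke) * Tzᵀ
      = Matrix.fromBlocks (Aa + Ba * (U * Q * (Za * Q)⁻¹)) Aab 0 Ab := by
    have h2 : Tz * (Be * Ke) * Tzᵀ = Matrix.fromBlocks (Ba * (U * Q * (Za * Q)⁻¹)) 0 0 0 := by
      rw [← Matrix.mul_assoc, hBdec, hKe, Matrix.mul_assoc, Matrix.mul_assoc _ Tz, hTz1,
        Matrix.mul_one, Matrix.fromRows_mul_fromCols]
      simp
    rw [Matrix.mul_add, Matrix.add_mul, hAdec, h2, Matrix.fromBlocks_add]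
    simp
  rw [hurwitz_iff_det] at hM hAb ⊢
  intro z hz
  have hc1 : Tz.map Complex.ofReal * Tzᵀ.map Complex.ofReal = 1 := by
    have := congrArg (fun X => X.map Complex.ofRealHom) hTz1
    simp only [Matrix.map_mul, Matrix.map_one _ (map_zero _) (map_one _)] at this
    exact this
  have hc2 : Tzᵀ.map Complex.ofReal * Tz.map Complex.ofReal = 1 := by
    have := congrArg (fun X => X.map Complex.ofRealHom) hTz2
    simp only [Matrix.map_mul, Matrix.map_one _ (map_zero _) (map_one _)] at this
    exact this
  have hcb : Tz.map Complex.ofReal * (Ae + Be * Ke).map Complex.ofReal * Tzᵀ.map Complex.ofReal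
      = (Matrix.fromBlocks (Aa + Ba * (U * Q * (Za * Q)⁻¹)) Aab 0 Ab).map Complex.ofReal := by
    have := congrArg (fun X => X.map Complex.ofRealHom) hblk
    simp only [Matrix.map_mul] at this
    exact this
  rw [← Matrix.det_conj_of_mul_eq_one hc1 hc2, Matrix.mul_sub, Matrix.sub_mul, hcb,
    Matrix.mul_smul, Matrix.mul_one, Matrix.smul_mul, hc1, Matrix.fromBlocks_map,
    ← Matrix.fromBlocks_one, Matrix.fromBlocks_smul, sub_eq_add_neg, Matrix.fromBlocks_neg,
    Matrix.fromBlocks_add] at hz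
  have h0 : z • (0 : Matrix (Fin (q - l)) (Fin l) ℂ)
      + -((0 : Matrix (Fin (q - l)) (Fin l) ℝ).map Complex.ofReal) = 0 := by
    ext; simp
  rw [h0, Matrix.det_fromBlocks_zero₂₁, mul_eq_zero, ← sub_eq_add_neg, ← sub_eq_add_neg] at hz
  exact hz.elim (hM z) (hAb z)
end
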